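/- arXiv:1402.5558 — 2 statements merged into one kernel-verified Lean document; each statement's English description precedes it below -/
import Mathlib

section
/- Fix d > 0 and let G_t be the two-dimensional heat kernel. Let φ̄ : [0,∞) → ℝ be measurable with ∫₀ᵗ |φ̄(s)| ds < ∞ for all t > 0, and define û(x,t) := ∫₀ᵗ G_{t−s}(x) φ̄(s) ds for x ≠ 0 and t > 0. Then for every x ∈ ℝ² with x ≠ 0 and every t > 0, the function x ↦ û(x,t) is differentiable at x and its spatial gradient satisfies ‖∇_x û(x,t)‖ ≤ (8 e^{−2}/π) |x|^{−3} · ∫₀ᵗ |φ̄(s)| ds. -/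
open MeasureTheory Real

/-- The two-dimensional heat (Green's) kernel with diffusion coefficient `d`. -/
noncomputable def heatKernel (d t : ℝ) (x : EuclideanSpace ℝ (Fin 2)) : ℝ :=
  (4 * Real.pi * d * t)⁻¹ * Real.exp (-‖x‖ ^ 2 / (4 * d * t))

lemma hk_aux1 (a : ℝ) (ha : 0 ≤ a) : a ^ 2 * Real.exp (-a) ≤ 4 * Real.exp (-2) := by
  have h1 : a / 2 ≤ Real.exp (a / 2 - 1) := by
    have := Real.add_one_le_exp (a / 2 - 1)
    linarith
  have h2 : (a / 2) ^ 2 ≤ Real.exp (a / 2 - 1) ^ 2 := by gcongr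
  have h3 : Real.exp (a / 2 - 1) ^ 2 = Real.exp (a + -2) := by
    rw [← Real.exp_nat_mul]; congr 1; push_cast; ring
  rw [h3, Real.exp_add] at h2
  have h4 : Real.exp a * Real.exp (-a) = 1 := by rw [← Real.exp_add]; simp
  have h5 := mul_le_mul_of_nonneg_right h2 (Real.exp_pos (-a)).le
  have h6 : Real.exp a * Real.exp (-2) * Real.exp (-a) = Real.exp (-2) := by
    linear_combination Real.exp (-2) * h4
  rw [h6] at h5
  linarith

lemma hk_aux2 (a : ℝ) : a * Real.exp (-a) ≤ 1 := by
  have h1 : a ≤ Real.exp a := by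
    have := Real.add_one_le_exp a
    linarith
  have h4 : Real.exp a * Real.exp (-a) = 1 := by rw [← Real.exp_add]; simp
  have h5 := mul_le_mul_of_nonneg_right h1 (Real.exp_pos (-a)).le
  linarith

noncomputable def hkGrad (d t : ℝ) (x : EuclideanSpace ℝ (Fin 2)) :
    EuclideanSpace ℝ (Fin 2) →L[ℝ] ℝ :=
  ((4 * Real.pi * d * t)⁻¹ * (Real.exp (-‖x‖ ^ 2 / (4 * d * t)) * (-2 / (4 * d * t)))) •
    innerSL ℝ x

lemma hk_hasFDerivAt (d t : ℝ) (x : EuclideanSpace ℝ (Fin 2)) :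
    HasFDerivAt (heatKernel d t) (hkGrad d t x) x := by
  have h := (((hasStrictFDerivAt_norm_sq x).hasFDerivAt.neg.mul_const
    ((4 * d * t)⁻¹)).exp.const_mul ((4 * Real.pi * d * t)⁻¹))
  refine (h.congr_fderiv ?_).congr_of_eventuallyEq ?_
  · ext v
    simp [hkGrad, div_eq_mul_inv]
    ring
  · exact Filter.Eventually.of_forall fun y => by simp [heatKernel, div_eq_mul_inv]

lemma hkGrad_bound (d t : ℝ) (hd : 0 < d) (ht : 0 ≤ t) (x : EuclideanSpace ℝ (Fin 2))
    (hx : x ≠ 0) : ‖hkGrad d t x‖ ≤ 8 * Real.exp (-2) / Real.pi * (‖x‖ ^ 3)⁻¹ := by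
  have hr : 0 < ‖x‖ := norm_pos_iff.mpr hx
  have hpi := Real.pi_pos
  rcases ht.eq_or_lt with rfl | ht
  · simp [hkGrad]; positivity
  · have h := hk_aux1 (‖x‖ ^ 2 / (4 * d * t)) (by positivity)
    rw [hkGrad, norm_smul, innerSL_apply_norm, Real.norm_eq_abs, neg_div, neg_div, mul_neg, mul_neg,
      abs_neg, abs_of_nonneg (by positivity)]
    calc _ = 2 / Real.pi * (‖x‖ ^ 3)⁻¹ * ((‖x‖ ^ 2 / (4 * d * t)) ^ 2 *
          Real.exp (-(‖x‖ ^ 2 / (4 * d * t)))) := by field_simp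
      _ ≤ 2 / Real.pi * (‖x‖ ^ 3)⁻¹ * (4 * Real.exp (-2)) := by gcongr
      _ = _ := by ring

lemma hk_bound (d t : ℝ) (hd : 0 < d) (ht : 0 ≤ t) (x : EuclideanSpace ℝ (Fin 2))
    (hx : x ≠ 0) : ‖heatKernel d t x‖ ≤ (Real.pi * ‖x‖ ^ 2)⁻¹ := by
  have hr : 0 < ‖x‖ := norm_pos_iff.mpr hx
  have hpi := Real.pi_pos
  rcases ht.eq_or_lt with rfl | ht
  · simp [heatKernel]; positivity
  · have h := hk_aux2 (‖x‖ ^ 2 / (4 * d * t))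
    rw [heatKernel, Real.norm_eq_abs, neg_div, abs_of_nonneg (by positivity)]
    calc _ = (Real.pi * ‖x‖ ^ 2)⁻¹ * ((‖x‖ ^ 2 / (4 * d * t)) *
          Real.exp (-(‖x‖ ^ 2 / (4 * d * t)))) := by field_simp
      _ ≤ (Real.pi * ‖x‖ ^ 2)⁻¹ * 1 := by gcongr
      _ = _ := by ring

/-- For `û(x,t) := ∫₀ᵗ G_{t−s}(x) φ̄(s) ds` with `φ̄` measurable and locally integrable,
for every `x ≠ 0` and `t > 0` the map `x ↦ û(x,t)` is differentiable at `x` and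
`‖∇_x û(x,t)‖ ≤ (8e⁻²/π)‖x‖⁻³ ∫₀ᵗ |φ̄(s)| ds`. -/
theorem source_term_gradient_bound (d : ℝ) (hd : 0 < d) (φb : ℝ → ℝ)
    (hφb_meas : Measurable φb)
    (hφb_int : ∀ t > (0 : ℝ), IntegrableOn (fun s => |φb s|) (Set.Ioc 0 t))
    (uhat : EuclideanSpace ℝ (Fin 2) → ℝ → ℝ)
    (huhat : uhat = fun x t => ∫ s in Set.Ioc (0 : ℝ) t, heatKernel d (t - s) x * φb s) :
    ∀ x : EuclideanSpace ℝ (Fin 2), x ≠ 0 → ∀ t > (0 : ℝ),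
      DifferentiableAt ℝ (fun y => uhat y t) x ∧
      ‖gradient (fun y => uhat y t) x‖ ≤
        8 * Real.exp (-2) / Real.pi * (‖x‖ ^ 3)⁻¹ * ∫ s in Set.Ioc (0 : ℝ) t, |φb s| := by
  intro x hx t ht
  subst huhat
  have hr : 0 < ‖x‖ := norm_pos_iff.mpr hx
  have hpi := Real.pi_pos
  have hφ := hφb_int t ht
  have hmeasF : ∀ y : EuclideanSpace ℝ (Fin 2),
      Measurable fun s => heatKernel d (t - s) y * φb s := by
    intro y; unfold heatKernel; fun_prop
  have hmeasF' : AEStronglyMeasurable (fun s => φb s • hkGrad d (t - s) x)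
      (volume.restrict (Set.Ioc 0 t)) := by
    refine Measurable.aestronglyMeasurable ?_
    unfold hkGrad
    fun_prop
  have hball : ∀ y ∈ Metric.ball x (‖x‖ / 2), ‖x‖ / 2 ≤ ‖y‖ := by
    intro y hy
    rw [mem_ball_iff_norm'] at hy
    have := norm_sub_norm_le x y
    linarith
  have key : HasFDerivAt (fun y => ∫ s in Set.Ioc (0 : ℝ) t, heatKernel d (t - s) y * φb s)
      (∫ s in Set.Ioc (0 : ℝ) t, φb s • hkGrad d (t - s) x) x := by
    refine hasFDerivAt_integral_of_dominated_of_fderiv_le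
      (F' := fun y s => φb s • hkGrad d (t - s) y)
      (bound := fun s => 8 * Real.exp (-2) / Real.pi * ((‖x‖ / 2) ^ 3)⁻¹ * |φb s|)
      (Metric.ball_mem_nhds x (half_pos hr)) ?_ ?_ hmeasF' ?_ (hφ.const_mul _) ?_
    · exact Filter.Eventually.of_forall fun y => (hmeasF y).aestronglyMeasurable
    · refine Integrable.mono' (hφ.const_mul ((Real.pi * ‖x‖ ^ 2)⁻¹))
        (hmeasF x).aestronglyMeasurable ?_
      filter_upwards [ae_restrict_mem measurableSet_Ioc] with s hs
      rw [norm_mul, Real.norm_eq_abs (φb s)]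
      gcongr
      exact hk_bound d _ hd (sub_nonneg.mpr hs.2) x hx
    · filter_upwards [ae_restrict_mem measurableSet_Ioc] with s hs y hy
      have h1 := hball y hy
      have hy0 : y ≠ 0 := norm_pos_iff.mp (lt_of_lt_of_le (half_pos hr) h1)
      rw [norm_smul, Real.norm_eq_abs, mul_comm]
      gcongr
      refine (hkGrad_bound d _ hd (sub_nonneg.mpr hs.2) y hy0).trans ?_
      gcongr
    · exact Filter.Eventually.of_forall fun s y _ => (hk_hasFDerivAt d (t - s) y).mul_const (φb s)
  refine ⟨key.differentiableAt, ?_⟩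
  rw [gradient, LinearIsometryEquiv.norm_map, key.fderiv, ← integral_const_mul]
  refine norm_integral_le_of_norm_le (hφ.const_mul _) ?_
  filter_upwards [ae_restrict_mem measurableSet_Ioc] with s hs
  rw [norm_smul, Real.norm_eq_abs, mul_comm]
  gcongr
  exact hkGrad_bound d _ hd (sub_nonneg.mpr hs.2) x hx
end

section
/- Fix d > 0 and let G_t be the two-dimensional heat kernel. Let Ω_O ⊆ ℝ² be a bounded open set with 0 ∈ Ω_O, let Γ := ∂Ω_O, let σ be the one-dimensional Hausdorff measure restricted to Γ, assumed finite, and let n : Γ → ℝ² be measurable with |n(x)| = 1 for all x ∈ Γ. Let φ̄ : [0,∞) → ℝ be measurable with ∫₀ᵗ |φ̄| < ∞ for all t, and define û(x,t) := ∫₀ᵗ G_{t−s}(x) φ̄(s) ds. Then the constant C_Γ := ∫_Γ (8e^{−2}/π)² |x|^{−6} dσ(x) is finite and positive, and for all t > 0 one has ∫₀ᵗ ∫_Γ |d ∇_x û(x,τ) · n(x)|² dσ(x) dτ ≤ d² C_Γ ∫₀ᵗ (∫₀^τ |φ̄(s)| ds)² dτ. -/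
open MeasureTheory Real
open scoped RealInnerProductSpace

open Filter Topology in
lemma aux_frontier_pos (Ω : Set (EuclideanSpace ℝ (Fin 2))) (ho : IsOpen Ω)
    (hb : Bornology.IsBounded Ω) (h0 : (0 : EuclideanSpace ℝ (Fin 2)) ∈ Ω) :
    0 < (MeasureTheory.Measure.hausdorffMeasure 1 :
      Measure (EuclideanSpace ℝ (Fin 2))) (frontier Ω) := by
  have hc : Continuous (fun p : ℝ × ℝ => (!₂[p.1, p.2] : EuclideanSpace ℝ (Fin 2))) := by
    fun_prop
  have hz : (!₂[(0:ℝ), (0:ℝ)] : EuclideanSpace ℝ (Fin 2)) = 0 := by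
    ext i; fin_cases i <;> simp
  have hc1 : Continuous (fun a : ℝ => (!₂[a, 0] : EuclideanSpace ℝ (Fin 2))) := by
    fun_prop
  have hop : IsOpen ((fun a : ℝ => (!₂[a, 0] : EuclideanSpace ℝ (Fin 2))) ⁻¹' Ω) := ho.preimage hc1
  have hsub : ((fun a : ℝ => (!₂[a, 0] : EuclideanSpace ℝ (Fin 2))) ⁻¹' Ω) ⊆
      (fun x : EuclideanSpace ℝ (Fin 2) => x 0) '' (frontier Ω) := by
    intro a ha
    by_contra hcon
    have hc2 : Continuous (fun b : ℝ => (!₂[a, b] : EuclideanSpace ℝ (Fin 2))) := by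
      fun_prop
    have hcl : IsClopen ((fun b : ℝ => (!₂[a, b] : EuclideanSpace ℝ (Fin 2))) ⁻¹' Ω) := by
      refine ⟨?_, ho.preimage hc2⟩
      have : ((fun b : ℝ => (!₂[a, b] : EuclideanSpace ℝ (Fin 2))) ⁻¹' Ω) =
          ((fun b : ℝ => (!₂[a, b] : EuclideanSpace ℝ (Fin 2))) ⁻¹' (closure Ω)) := by
        apply Set.Subset.antisymm
        · exact Set.preimage_mono subset_closure
        · intro b hbb
          by_contra hn
          apply hcon
          refine ⟨!₂[a, b], ?_, by simp⟩
          rw [ho.frontier_eq]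
          exact ⟨hbb, hn⟩
      rw [this]
      exact isClosed_closure.preimage hc2
    rcases isClopen_iff.1 hcl with h | h
    · have : (0:ℝ) ∈ ((fun b : ℝ => (!₂[a, b] : EuclideanSpace ℝ (Fin 2))) ⁻¹' Ω) := ha
      rw [h] at this
      exact this
    · obtain ⟨R, hR⟩ := hb.exists_norm_le
      have : (|R| + 1) ∈ ((fun b : ℝ => (!₂[a, b] : EuclideanSpace ℝ (Fin 2))) ⁻¹' Ω) := by
        rw [h]; trivial
      have h1 := hR _ this
      have h2 := PiLp.norm_apply_le (!₂[a, |R| + 1] : EuclideanSpace ℝ (Fin 2)) 1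
      simp at h2
      have h3 := le_abs_self (|R| + 1)
      have h4 := le_abs_self R
      linarith
  have hlip : LipschitzWith 1 (fun x : EuclideanSpace ℝ (Fin 2) => x 0) := by
    apply LipschitzWith.of_dist_le_mul
    intro x y
    have := PiLp.norm_apply_le (x - y) 0
    simpa [dist_eq_norm] using this
  have h1 := hlip.hausdorffMeasure_image_le (zero_le_one' ℝ) (frontier Ω)
  rw [hausdorffMeasure_real] at h1
  have h2 := hop.measure_pos volume ⟨0, by simpa [hz] using h0⟩
  have h3 := h2.trans_le ((measure_mono hsub).trans h1)
  simpa using h3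

lemma aux_z2 (z : ℝ) (hz : 0 ≤ z) : z ^ 2 * Real.exp (-z) ≤ 4 * Real.exp (-2) := by
  have h := Real.add_one_le_exp (z / 2 - 1)
  have h2 : z ≤ 2 * Real.exp (z / 2 - 1) := by linarith
  have h3 : z ^ 2 ≤ (2 * Real.exp (z / 2 - 1)) ^ 2 := by gcongr
  have h4 : (2 * Real.exp (z / 2 - 1)) ^ 2 = 4 * Real.exp (-2) * Real.exp z := by
    rw [mul_pow, ← Real.exp_nat_mul, mul_assoc, ← Real.exp_add]
    norm_num
    ring_nf
  rw [h4] at h3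
  rw [Real.exp_neg, ← div_eq_mul_inv, div_le_iff₀ (Real.exp_pos z)]
  exact h3

lemma aux_z1 (z : ℝ) : z * Real.exp (-z) ≤ 1 := by
  have h := Real.add_one_le_exp z
  rw [Real.exp_neg, ← div_eq_mul_inv, div_le_iff₀ (Real.exp_pos z)]
  linarith

lemma aux_kernel_bound (d : ℝ) (hd : 0 < d) (t : ℝ) (ht : 0 ≤ t)
    (x : EuclideanSpace ℝ (Fin 2)) (hx : x ≠ 0) :
    |heatKernel d t x| ≤ (Real.pi * ‖x‖ ^ 2)⁻¹ := by
  have hr : 0 < ‖x‖ := norm_pos_iff.2 hx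
  rcases ht.eq_or_lt with rfl | ht
  · simp [heatKernel]; positivity
  have := aux_z1 (‖x‖ ^ 2 / (4 * d * t))
  have hpi := Real.pi_pos
  rw [heatKernel, abs_of_nonneg (by positivity)]
  have e : (4 * Real.pi * d * t)⁻¹ * Real.exp (-‖x‖ ^ 2 / (4 * d * t)) =
      (Real.pi * ‖x‖ ^ 2)⁻¹ * (‖x‖ ^ 2 / (4 * d * t) * Real.exp (-(‖x‖ ^ 2 / (4 * d * t)))) := by
    rw [neg_div]; field_simp
  rw [e]
  exact mul_le_of_le_one_right (by positivity) this

lemma aux_grad_bound (d : ℝ) (hd : 0 < d) (t : ℝ) (ht : 0 ≤ t)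
    (x : EuclideanSpace ℝ (Fin 2)) (hx : x ≠ 0) :
    |heatKernel d t x * (2 / (4 * d * t))| * ‖x‖ ≤ 8 * Real.exp (-2) / Real.pi * (‖x‖ ^ 3)⁻¹ := by
  have hr : 0 < ‖x‖ := norm_pos_iff.2 hx
  have hpi := Real.pi_pos
  rcases ht.eq_or_lt with rfl | ht
  · simp [heatKernel]; positivity
  have := aux_z2 (‖x‖ ^ 2 / (4 * d * t)) (by positivity)
  rw [heatKernel, abs_of_nonneg (by positivity)]
  have e : (4 * Real.pi * d * t)⁻¹ * Real.exp (-‖x‖ ^ 2 / (4 * d * t)) * (2 / (4 * d * t)) * ‖x‖ =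
      2 / Real.pi * (‖x‖ ^ 3)⁻¹ *
        ((‖x‖ ^ 2 / (4 * d * t)) ^ 2 * Real.exp (-(‖x‖ ^ 2 / (4 * d * t)))) := by
    rw [neg_div]; field_simp
  rw [e]
  calc _ ≤ 2 / Real.pi * (‖x‖ ^ 3)⁻¹ * (4 * Real.exp (-2)) := by gcongr
    _ = _ := by ring

lemma aux_hasFDerivAt (d t : ℝ) (x : EuclideanSpace ℝ (Fin 2)) :
    HasFDerivAt (fun y => heatKernel d t y)
      ((-(heatKernel d t x * (2 / (4 * d * t)))) • innerSL ℝ x) x := by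
  unfold heatKernel
  have h1 : HasFDerivAt (fun y : EuclideanSpace ℝ (Fin 2) => ‖y‖ ^ 2) (2 • innerSL ℝ x) x :=
    (hasStrictFDerivAt_norm_sq x).hasFDerivAt
  have h2 := (((h1.neg).mul_const ((4 * d * t)⁻¹)).exp).const_mul ((4 * Real.pi * d * t)⁻¹)
  simp only [div_eq_mul_inv]
  refine h2.congr_fderiv ?_
  ext v
  simp
  ring

lemma aux_fderiv (d : ℝ) (hd : 0 < d) (φ : ℝ → ℝ) (hm : Measurable φ) (τ : ℝ)
    (hi : IntegrableOn (fun s => |φ s|) (Set.Ioc 0 τ))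
    (x : EuclideanSpace ℝ (Fin 2)) (hx : x ≠ 0) :
    ‖fderiv ℝ (fun y => ∫ s in Set.Ioc (0 : ℝ) τ, heatKernel d (τ - s) y * φ s) x‖ ≤
      8 * Real.exp (-2) / Real.pi * (‖x‖ ^ 3)⁻¹ * ∫ s in Set.Ioc (0 : ℝ) τ, |φ s| := by
  have hr : 0 < ‖x‖ := norm_pos_iff.2 hx
  have hpi := Real.pi_pos
  have hmk : ∀ y, Measurable (fun s => heatKernel d (τ - s) y) := by
    intro y; unfold heatKernel; fun_prop
  have hb : ∀ y : EuclideanSpace ℝ (Fin 2), y ≠ 0 → ∀ s ∈ Set.Ioc (0:ℝ) τ,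
      ‖(φ s * (-(heatKernel d (τ - s) y * (2 / (4 * d * (τ - s)))))) • innerSL ℝ y‖ ≤
      8 * Real.exp (-2) / Real.pi * (‖y‖ ^ 3)⁻¹ * |φ s| := by
    intro y hy s hs
    have := aux_grad_bound d hd (τ - s) (by linarith [hs.2]) y hy
    rw [norm_smul, innerSL_apply_norm, norm_mul, norm_neg, Real.norm_eq_abs, Real.norm_eq_abs]
    calc _ = |φ s| * (|heatKernel d (τ - s) y * (2 / (4 * d * (τ - s)))| * ‖y‖) := by ring
      _ ≤ |φ s| * (8 * Real.exp (-2) / Real.pi * (‖y‖ ^ 3)⁻¹) := by gcongr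
      _ = _ := by ring
  have hball : ∀ y ∈ Metric.ball x (‖x‖ / 2), ‖x‖ / 2 ≤ ‖y‖ := by
    intro y hy
    rw [Metric.mem_ball, dist_eq_norm] at hy
    have := norm_sub_norm_le x y
    rw [norm_sub_rev] at this
    linarith
  have key := hasFDerivAt_integral_of_dominated_of_fderiv_le (𝕜 := ℝ)
    (μ := volume.restrict (Set.Ioc (0:ℝ) τ))
    (F := fun y s => heatKernel d (τ - s) y * φ s)
    (F' := fun y s => (φ s * (-(heatKernel d (τ - s) y * (2 / (4 * d * (τ - s)))))) • innerSL ℝ y)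
    (x₀ := x) (s := Metric.ball x (‖x‖ / 2))
    (bound := fun s => 8 * Real.exp (-2) / Real.pi * ((‖x‖ / 2) ^ 3)⁻¹ * |φ s|)
    (Metric.ball_mem_nhds x (by positivity))
    (Filter.Eventually.of_forall fun y => ((hmk y).mul hm).aestronglyMeasurable)
    (by
      refine Integrable.mono' (hi.integrable.const_mul ((Real.pi * ‖x‖ ^ 2)⁻¹))
        ((hmk x).mul hm).aestronglyMeasurable ?_
      refine (ae_restrict_mem measurableSet_Ioc).mono fun s hs => ?_
      rw [norm_mul, Real.norm_eq_abs, Real.norm_eq_abs]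
      have := aux_kernel_bound d hd (τ - s) (by linarith [hs.2]) x hx
      gcongr)
    (by
      have : Measurable (fun s => φ s * (-(heatKernel d (τ - s) x * (2 / (4 * d * (τ - s)))))) := by
        have := hmk x
        fun_prop
      exact this.aestronglyMeasurable.smul aestronglyMeasurable_const)
    (by
      refine (ae_restrict_mem measurableSet_Ioc).mono fun s hs y hy => ?_
      have h1 := hball y hy
      have h2 : 0 < ‖y‖ := by linarith
      refine (hb y (norm_pos_iff.1 h2) s hs).trans ?_
      gcongr)
    (hi.integrable.const_mul _)
    (by
      refine Filter.Eventually.of_forall fun s y _ => ?_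
      refine ((aux_hasFDerivAt d (τ - s) y).mul_const (φ s)).congr_fderiv ?_
      rw [smul_smul])
  rw [key.fderiv, ← integral_const_mul]
  refine norm_integral_le_of_norm_le (hi.integrable.const_mul _) ?_
  exact (ae_restrict_mem measurableSet_Ioc).mono fun s hs => hb x hx s hs

/-- Flux bound for the pure source solution `û(x,t) := ∫₀ᵗ G_{t−s}(x) φ̄(s) ds`:
the constant `C_Γ := ∫_Γ (8e⁻²/π)² ‖x‖⁻⁶ dσ` is finite and positive, and for all `t > 0`
`∫₀ᵗ ∫_Γ |d ∇û·n|² dσ dτ ≤ d² C_Γ ∫₀ᵗ ‖φ̄‖²_{L¹(0,τ)} dτ`. -/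
theorem flux_bound_zero_initial (d : ℝ) (hd : 0 < d)
    (Ω_O : Set (EuclideanSpace ℝ (Fin 2))) (hΩ_open : IsOpen Ω_O)
    (hΩ_bdd : Bornology.IsBounded Ω_O) (h0 : (0 : EuclideanSpace ℝ (Fin 2)) ∈ Ω_O)
    (σ : Measure (EuclideanSpace ℝ (Fin 2)))
    (hσ : σ = (MeasureTheory.Measure.hausdorffMeasure 1 :
      Measure (EuclideanSpace ℝ (Fin 2))).restrict (frontier Ω_O))
    (hσ_fin : IsFiniteMeasure σ)
    (n : EuclideanSpace ℝ (Fin 2) → EuclideanSpace ℝ (Fin 2)) (hn_meas : Measurable n)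
    (hn : ∀ x ∈ frontier Ω_O, ‖n x‖ = 1)
    (φb : ℝ → ℝ) (hφb_meas : Measurable φb)
    (hφb_int : ∀ t > (0 : ℝ), IntegrableOn (fun s => |φb s|) (Set.Ioc 0 t))
    (uhat : EuclideanSpace ℝ (Fin 2) → ℝ → ℝ)
    (huhat : uhat = fun x t => ∫ s in Set.Ioc (0 : ℝ) t, heatKernel d (t - s) x * φb s) :
    Integrable (fun x => (8 * Real.exp (-2) / Real.pi) ^ 2 * (‖x‖ ^ 6)⁻¹) σ ∧
    0 < ∫ x, (8 * Real.exp (-2) / Real.pi) ^ 2 * (‖x‖ ^ 6)⁻¹ ∂σ ∧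
    ∀ t > (0 : ℝ),
      (∫ τ in Set.Ioc (0 : ℝ) t, ∫ x, |d * ⟪gradient (fun y => uhat y τ) x, n x⟫| ^ 2 ∂σ) ≤
        d ^ 2 * (∫ x, (8 * Real.exp (-2) / Real.pi) ^ 2 * (‖x‖ ^ 6)⁻¹ ∂σ) *
          ∫ τ in Set.Ioc (0 : ℝ) t, (∫ s in Set.Ioc (0 : ℝ) τ, |φb s|) ^ 2 := by
  have hms : MeasurableSet (frontier Ω_O) := isClosed_frontier.measurableSet
  have hae : ∀ᵐ x ∂σ, x ∈ frontier Ω_O := by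
    rw [hσ]; exact ae_restrict_mem hms
  obtain ⟨ε, hε, hball⟩ := Metric.isOpen_iff.1 hΩ_open 0 h0
  have hnorm : ∀ x ∈ frontier Ω_O, ε ≤ ‖x‖ := by
    intro x hx
    by_contra hlt
    rw [hΩ_open.frontier_eq] at hx
    exact hx.2 (hball (by simpa using hlt))
  have hint : Integrable (fun x => (8 * Real.exp (-2) / Real.pi) ^ 2 * (‖x‖ ^ 6)⁻¹) σ := by
    refine Integrable.mono' (integrable_const ((8 * Real.exp (-2) / Real.pi) ^ 2 * (ε ^ 6)⁻¹)) ?_ ?_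
    · have : Measurable (fun x : EuclideanSpace ℝ (Fin 2) =>
        (8 * Real.exp (-2) / Real.pi) ^ 2 * (‖x‖ ^ 6)⁻¹) := by fun_prop
      exact this.aestronglyMeasurable
    · refine hae.mono fun x hx => ?_
      have := hnorm x hx
      rw [Real.norm_eq_abs, abs_of_nonneg (by positivity)]
      gcongr
  refine ⟨hint, ?_, ?_⟩
  · rw [integral_pos_iff_support_of_nonneg (fun x => by positivity) hint]
    have h1 : 0 < σ (frontier Ω_O) := by
      rw [hσ, Measure.restrict_apply_self]
      exact aux_frontier_pos Ω_O hΩ_open hΩ_bdd h0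
    refine h1.trans_le (measure_mono fun x hx => ?_)
    have : 0 < ‖x‖ := hε.trans_le (hnorm x hx)
    rw [Function.mem_support]
    positivity
  · intro t ht
    have hmono : MonotoneOn (fun τ => (∫ s in Set.Ioc (0 : ℝ) τ, |φb s|) ^ 2) (Set.Icc 0 t) := by
      intro a ha b hb hab
      have h1 : (∫ s in Set.Ioc (0 : ℝ) a, |φb s|) ≤ ∫ s in Set.Ioc (0 : ℝ) b, |φb s| := by
        refine setIntegral_mono_set ?_ (Filter.Eventually.of_forall fun s => abs_nonneg _)
          (Set.Ioc_subset_Ioc_right hab).eventuallyLE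
        exact (hφb_int t ht).mono_set (Set.Ioc_subset_Ioc_right hb.2)
      have h2 : 0 ≤ ∫ s in Set.Ioc (0 : ℝ) a, |φb s| := integral_nonneg fun s => abs_nonneg _
      exact pow_le_pow_left₀ h2 h1 2
    have hint2 : IntegrableOn (fun τ => (∫ s in Set.Ioc (0 : ℝ) τ, |φb s|) ^ 2) (Set.Ioc 0 t) :=
      (hmono.integrableOn_isCompact isCompact_Icc).mono_set Set.Ioc_subset_Icc_self
    rw [← integral_const_mul]
    refine integral_mono_of_nonneg
      (Filter.Eventually.of_forall fun τ => integral_nonneg fun x => by positivity)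
      (hint2.integrable.const_mul _) ?_
    refine (ae_restrict_mem measurableSet_Ioc).mono fun τ hτ => ?_
    set A := ∫ s in Set.Ioc (0 : ℝ) τ, |φb s| with hA
    have hA0 : 0 ≤ A := integral_nonneg fun s => abs_nonneg _
    have e : d ^ 2 * (∫ x, (8 * Real.exp (-2) / Real.pi) ^ 2 * (‖x‖ ^ 6)⁻¹ ∂σ) * A ^ 2 =
        ∫ x, (d ^ 2 * A ^ 2) * ((8 * Real.exp (-2) / Real.pi) ^ 2 * (‖x‖ ^ 6)⁻¹) ∂σ := by
      rw [integral_const_mul (d ^ 2 * A ^ 2)]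
      exact mul_right_comm _ _ _
    show (∫ x, |d * ⟪gradient (fun y => uhat y τ) x, n x⟫| ^ 2 ∂σ) ≤ _
    simp only [← hA]
    rw [e]
    refine integral_mono_of_nonneg (Filter.Eventually.of_forall fun x => by positivity)
      (hint.const_mul _) ?_
    refine hae.mono fun x hx => ?_
    have hx0 : x ≠ 0 := norm_pos_iff.1 (hε.trans_le (hnorm x hx))
    have h1 := aux_fderiv d hd φb hφb_meas τ (hφb_int τ hτ.1) x hx0
    have h2 : ‖gradient (fun y => uhat y τ) x‖ ≤
        8 * Real.exp (-2) / Real.pi * (‖x‖ ^ 3)⁻¹ * A := by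
      rw [gradient, LinearIsometryEquiv.norm_map, huhat]
      exact h1
    have h3 : |⟪gradient (fun y => uhat y τ) x, n x⟫| ≤
        8 * Real.exp (-2) / Real.pi * (‖x‖ ^ 3)⁻¹ * A := by
      refine (abs_real_inner_le_norm _ _).trans ?_
      rw [hn x hx, mul_one]
      exact h2
    show |d * ⟪gradient (fun y => uhat y τ) x, n x⟫| ^ 2 ≤ _
    rw [abs_mul, abs_of_pos hd, mul_pow]
    calc _ ≤ d ^ 2 * (8 * Real.exp (-2) / Real.pi * (‖x‖ ^ 3)⁻¹ * A) ^ 2 := by gcongr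
      _ = _ := by
        have : (‖x‖ ^ 6)⁻¹ = ((‖x‖ ^ 3)⁻¹) ^ 2 := by rw [inv_pow, ← pow_mul]
        beta_reduce
        rw [this]; ring
end
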